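/- arXiv:1412.7457 — 2 statements merged into one kernel-verified Lean document; each statement's English description precedes it below -/
import Mathlib

section
/- Let f : ℝ^n → ℝ be convex and continuously differentiable with L-Lipschitz continuous gradient (L > 0), let x* be a minimizer of f with f* = f(x*), let β ∈ [0,1), α > 0, λ ∈ (0,1], and let {x_k} be generated by the Heavy-ball iteration x_{k+1} = x_k - α∇f(x_k) + β(x_k - x_{k-1}). Define p_k = (β/(1-β))(x_k - x_{k-1}). Then for every k, (2α/(1-β))·(λ + β/(1-β))·(f(x_k) - f*) + ‖x_{k+1} + p_{k+1} - x*‖² ≤ (2αβ/(1-β)²)·(f(x_{k-1}) - f*) + ‖x_k + p_k - x*‖² + (α/(1-β))·(α/(1-β) - (2-λ)/L)·‖∇f(x_k)‖². -/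
/-!
Write `g = ∇f(x_k)`, `a = α / (1 - β)`, `b = β / (1 - β)` and `p_k = b (x_k - x_{k-1})`. The Heavy-ball
recursion makes `x_k + p_k` follow a plain gradient step,
`x_{k+1} + p_{k+1} = (x_k + p_k) - a g`, so after expanding the square the claim reduces to a lower
bound on `⟪g, x_k - x* + p_k⟫`. Three consequences of convexity and smoothness provide it:

* `f(x_k) - f* + ‖g‖² / (2L) ≤ ⟪g, x_k - x*⟫` (`sub_add_sq_le_inner_minimizer`),
* `f(x_k) - f(x_{k-1}) ≤ ⟪g, x_k - x_{k-1}⟫` (`convex_gradient_lower_bound`),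
* `‖g‖² / (2L) ≤ f(x_k) - f*` (`sq_gradient_le_sub_min`), used with weight `1 - λ`.
-/

open scoped RealInnerProductSpace

section GradientInequalities

variable {E : Type*} [NormedAddCommGroup E] [InnerProductSpace ℝ E] [CompleteSpace E]
  {f : E → ℝ} {f' : E → E} {L : ℝ}

lemma hasDerivAt_comp_line (hgrad : ∀ z, HasGradientAt f (f' z) z) (x v : E) (t : ℝ) :
    HasDerivAt (fun s : ℝ => f (x + s • v)) ⟪f' (x + t • v), v⟫ t := by
  have hline : HasDerivAt (fun s : ℝ => x + s • v) v t := by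
    simpa using ((hasDerivAt_id t).smul_const v).const_add x
  simpa [Function.comp_def] using
    (hgrad (x + t • v)).hasFDerivAt.comp_hasDerivAt t hline

lemma convex_gradient_lower_bound (hconv : ConvexOn ℝ Set.univ f)
    (hgrad : ∀ z, HasGradientAt f (f' z) z) (x y : E) :
    f x + ⟪f' x, y - x⟫ ≤ f y := by
  have hc : ConvexOn ℝ Set.univ (fun s : ℝ => f (x + s • (y - x))) := by
    have h := hconv.comp_affineMap (AffineMap.lineMap (k := ℝ) x y)
    simpa [Function.comp_def, AffineMap.lineMap_apply, add_comm] using h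
  have h := hc.le_slope_of_hasDerivAt (Set.mem_univ 0) (Set.mem_univ 1) one_pos
    (hasDerivAt_comp_line hgrad x (y - x) 0)
  simp [slope_def_field] at h
  linarith

/-- The descent lemma: an `L`-Lipschitz gradient bounds `f` above by a quadratic. -/
lemma descent_lemma (hgrad : ∀ z, HasGradientAt f (f' z) z)
    (hlip : ∀ z w, ‖f' z - f' w‖ ≤ L * ‖z - w‖) (x v : E) :
    f (x + v) ≤ f x + ⟪f' x, v⟫ + L / 2 * ‖v‖ ^ 2 := by
  -- The gap between `f` and the quadratic model is nonincreasing along the ray from `x`.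
  have hd : ∀ t : ℝ, HasDerivAt
      (fun s : ℝ => f (x + s • v) - s * ⟪f' x, v⟫ - s ^ 2 * (L / 2 * ‖v‖ ^ 2))
      (⟪f' (x + t • v), v⟫ - ⟪f' x, v⟫ - 2 * t * (L / 2 * ‖v‖ ^ 2)) t := fun t => by
    have h1 := (hasDerivAt_id t).mul_const ⟪f' x, v⟫
    have h2 := (hasDerivAt_pow 2 t).mul_const (L / 2 * ‖v‖ ^ 2)
    exact (((hasDerivAt_comp_line hgrad x v t).sub h1).sub h2).congr_deriv (by simp)
  have hanti := antitoneOn_of_deriv_nonpos (convex_Icc (0 : ℝ) 1)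
    (fun t _ => (hd t).continuousAt.continuousWithinAt)
    (fun t _ => (hd t).differentiableAt.differentiableWithinAt)
    (fun t ht => by
      rw [interior_Icc] at ht
      rw [(hd t).deriv, ← inner_sub_left]
      have h1 := real_inner_le_norm (f' (x + t • v) - f' x) v
      have h2 := hlip (x + t • v) x
      rw [add_sub_cancel_left, norm_smul, Real.norm_of_nonneg ht.1.le] at h2
      nlinarith [mul_le_mul_of_nonneg_right h2 (norm_nonneg v)])
  have h := hanti (Set.left_mem_Icc.2 zero_le_one) (Set.right_mem_Icc.2 zero_le_one) zero_le_one
  simp at h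
  linarith

/-- One gradient step of length `1 / L` decreases `f` by at least `‖f' x‖² / (2L)`. -/
lemma sq_gradient_le_sub_min (hL : 0 < L) (hgrad : ∀ z, HasGradientAt f (f' z) z)
    (hlip : ∀ z w, ‖f' z - f' w‖ ≤ L * ‖z - w‖) {xstar : E} (hmin : ∀ z, f xstar ≤ f z) (x : E) :
    ‖f' x‖ ^ 2 / (2 * L) ≤ f x - f xstar := by
  have h := descent_lemma hgrad hlip x (-(L⁻¹ • f' x))
  have hm := hmin (x + -(L⁻¹ • f' x))
  rw [inner_neg_right, real_inner_smul_right, real_inner_self_eq_norm_sq, norm_neg, norm_smul,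
    Real.norm_of_nonneg (inv_nonneg.2 hL.le)] at h
  have e : -(L⁻¹ * ‖f' x‖ ^ 2) + L / 2 * (L⁻¹ * ‖f' x‖) ^ 2 = -(‖f' x‖ ^ 2 / (2 * L)) := by
    field_simp
    ring
  linarith

lemma sub_add_sq_le_inner_minimizer (hL : 0 < L) (hconv : ConvexOn ℝ Set.univ f)
    (hgrad : ∀ z, HasGradientAt f (f' z) z) (hlip : ∀ z w, ‖f' z - f' w‖ ≤ L * ‖z - w‖)
    {xstar : E} (hmin : ∀ z, f xstar ≤ f z) (x : E) :
    f x - f xstar + ‖f' x‖ ^ 2 / (2 * L) ≤ ⟪f' x, x - xstar⟫ := by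
  have h0 : f' xstar = 0 := by
    have h := sq_gradient_le_sub_min hL hgrad hlip hmin xstar
    rw [sub_self, div_le_iff₀ (by positivity), zero_mul] at h
    simpa using le_antisymm h (sq_nonneg _)
  -- `x* + f' x / L` minimizes the quadratic upper model at `x*` minus the linear lower model
  -- at `x`, so comparing the two models there gives the sharpest bound.
  have hup := descent_lemma hgrad hlip xstar (L⁻¹ • f' x)
  have hlow := convex_gradient_lower_bound hconv hgrad x (xstar + L⁻¹ • f' x)
  have hsplit : xstar + L⁻¹ • f' x - x = L⁻¹ • f' x - (x - xstar) := by abel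
  rw [hsplit, inner_sub_right, real_inner_smul_right, real_inner_self_eq_norm_sq] at hlow
  rw [h0, inner_zero_left, norm_smul, Real.norm_of_nonneg (inv_nonneg.2 hL.le)] at hup
  have e : L⁻¹ * ‖f' x‖ ^ 2 - L / 2 * (L⁻¹ * ‖f' x‖) ^ 2 = ‖f' x‖ ^ 2 / (2 * L) := by
    field_simp
    ring
  linarith

end GradientInequalities

/-- Key per-step inequality in the proof of Theorem 1, with
p_k = (β/(1-β))(x_k - x_{k-1}) and balancing parameter λ ∈ (0,1]. -/
theorem heavy_ball_per_step_inequality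
    {n : ℕ} (f : EuclideanSpace ℝ (Fin n) → ℝ)
    (f' : EuclideanSpace ℝ (Fin n) → EuclideanSpace ℝ (Fin n))
    (L : ℝ) (hL : 0 < L)
    (hconv : ConvexOn ℝ Set.univ f)
    (hC1 : ContDiff ℝ 1 f)
    (hgrad : ∀ z, HasGradientAt f (f' z) z)
    (hlip : ∀ z w, ‖f' z - f' w‖ ≤ L * ‖z - w‖)
    (xstar : EuclideanSpace ℝ (Fin n)) (hmin : ∀ z, f xstar ≤ f z)
    (α β lam : ℝ) (hβ0 : 0 ≤ β) (hβ1 : β < 1) (hα0 : 0 < α)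
    (hlam0 : 0 < lam) (hlam1 : lam ≤ 1)
    (x : ℤ → EuclideanSpace ℝ (Fin n))
    (hiter : ∀ k : ℤ,
      x (k + 1) = x k - α • f' (x k) + β • (x k - x (k - 1)))
    (k : ℤ) :
    2 * α / (1 - β) * (lam + β / (1 - β)) * (f (x k) - f xstar) +
        ‖x (k + 1) + (β / (1 - β)) • (x (k + 1) - x k) - xstar‖ ^ 2 ≤
      2 * α * β / (1 - β) ^ 2 * (f (x (k - 1)) - f xstar) +
        ‖x k + (β / (1 - β)) • (x k - x (k - 1)) - xstar‖ ^ 2 +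
        α / (1 - β) * (α / (1 - β) - (2 - lam) / L) * ‖f' (x k)‖ ^ 2 := by
  have hβ : 0 < 1 - β := by linarith
  have hstep : x (k + 1) + (β / (1 - β)) • (x (k + 1) - x k) - xstar =
      (x k + (β / (1 - β)) • (x k - x (k - 1)) - xstar) - (α / (1 - β)) • f' (x k) := by
    rw [hiter k]
    match_scalars <;> field_simp <;> ring
  have hinner : ⟪x k + (β / (1 - β)) • (x k - x (k - 1)) - xstar, f' (x k)⟫ =
      ⟪f' (x k), x k - xstar⟫ - β / (1 - β) * ⟪f' (x k), x (k - 1) - x k⟫ := by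
    rw [real_inner_comm, ← real_inner_smul_right, ← inner_sub_right]
    congr 1
    module
  have h1 := sub_add_sq_le_inner_minimizer hL hconv hgrad hlip hmin (x k)
  have h2 := convex_gradient_lower_bound hconv hgrad (x k) (x (k - 1))
  have h3 := sq_gradient_le_sub_min hL hgrad hlip hmin (x k)
  rw [hstep, norm_sub_sq_real, real_inner_smul_right, hinner, norm_smul, mul_pow, Real.norm_eq_abs,
    sq_abs]
  have ha : 0 < α / (1 - β) := by positivity
  have hb : 0 ≤ β / (1 - β) := by positivity
  have e1 : 2 * α / (1 - β) = 2 * (α / (1 - β)) := by ring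
  have e2 : 2 * α * β / (1 - β) ^ 2 = 2 * (α / (1 - β)) * (β / (1 - β)) := by
    field_simp
  have e3 : (2 - lam) / L * ‖f' (x k)‖ ^ 2 = 2 * (2 - lam) * (‖f' (x k)‖ ^ 2 / (2 * L)) := by
    field_simp
  rw [e1, e2, mul_assoc (α / (1 - β)) (_ - _), sub_mul, e3]
  generalize α / (1 - β) = a at *
  generalize β / (1 - β) = b at *
  have h1' := mul_le_mul_of_nonneg_left h1 ha.le
  have h2' := mul_le_mul_of_nonneg_left h2 (mul_nonneg ha.le hb)
  have h3' := mul_le_mul_of_nonneg_left h3 (mul_nonneg ha.le (sub_nonneg.2 hlam1))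
  linarith
end

section
/- Let f : ℝ^n → ℝ be convex and continuously differentiable with L-Lipschitz continuous gradient (L > 0), let x* be a minimizer of f with f* = f(x*), and fix α₀ ∈ (0, 1/L]. Let {x_k} satisfy x_{k+1} = x_k - (α₀/(k+2)) ∇f(x_k) + (k/(k+2)) (x_k - x_{k-1}) and set p_k = k(x_k - x_{k-1}). Then for every k ≥ 0, 2α₀(k+1)(f(x_k) - f*) + ‖x_{k+1} + p_{k+1} - x*‖² ≤ 2α₀ k (f(x_{k-1}) - f*) + ‖x_k + p_k - x*‖². -/
open scoped RealInnerProductSpace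

/-!
Write `g = f' (x k)` and `u k = x k + k • (x k - x (k - 1))`. The weights in the iteration are chosen
so that `u (k + 1) = u k - a₀ • g`, so the heavy-ball step is a plain gradient step for `u`. Expanding
the square leaves `-2 a₀ ⟪g, x k - x*⟫ - 2 a₀ k ⟪g, x k - x (k - 1)⟫ + a₀² ‖g‖²`. The second inner
product is bounded below by convexity (`gradient_ineq`), the first by the cocoercivity-type estimate
`f (x k) - f x* + ‖g‖² / (2 L) ≤ ⟪g, x k - x*⟫` (`gradient_ineq_strong`), whose extra term absorbs
`a₀² ‖g‖²` because `a₀ ≤ 1 / L`.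
-/

section Aux

variable {E : Type*} [NormedAddCommGroup E] [InnerProductSpace ℝ E] [CompleteSpace E]

lemma hasDerivAt_along_line {f : E → ℝ} {f' : E → E} (hgrad : ∀ z, HasGradientAt f (f' z) z)
    (y v : E) (t : ℝ) :
    HasDerivAt (fun t : ℝ => f (y + t • v)) ⟪f' (y + t • v), v⟫ t := by
  have h1 : HasDerivAt (fun t : ℝ => y + t • v) v t := by
    simpa using ((hasDerivAt_id t).smul_const v).const_add y
  exact ((hgrad (y + t • v)).hasFDerivAt.comp_hasDerivAt t h1).congr_deriv (by simp)

/-- A differentiable convex function lies above its tangent planes. -/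
lemma gradient_ineq {f : E → ℝ} {f' : E → E} (hconv : ConvexOn ℝ Set.univ f)
    (hgrad : ∀ z, HasGradientAt f (f' z) z) (y z : E) :
    f y + ⟪f' y, z - y⟫ ≤ f z := by
  have hc : ConvexOn ℝ Set.univ (fun t : ℝ => f (y + t • (z - y))) := by
    have h := hconv.comp_affineMap (AffineMap.lineMap y z : ℝ →ᵃ[ℝ] E)
    simpa [Function.comp_def, AffineMap.lineMap_apply, add_comm] using h
  have h := hc.le_slope_of_hasDerivAt (Set.mem_univ 0) (Set.mem_univ 1) one_pos
    (hasDerivAt_along_line hgrad y (z - y) 0)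
  simp [slope_def_field] at h
  linarith

/-- The descent lemma: a function with `L`-Lipschitz gradient lies below the quadratic
with curvature `L` that is tangent to it at `y`. -/
lemma descent {f : E → ℝ} {f' : E → E} {L : ℝ} (hgrad : ∀ z, HasGradientAt f (f' z) z)
    (hlip : ∀ z w, ‖f' z - f' w‖ ≤ L * ‖z - w‖) (y v : E) :
    f (y + v) ≤ f y + ⟪f' y, v⟫ + L / 2 * ‖v‖ ^ 2 := by
  have hB (t : ℝ) : HasDerivAt (fun t : ℝ => f y + t * ⟪f' y, v⟫ + L / 2 * ‖v‖ ^ 2 * t ^ 2)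
      (⟪f' y, v⟫ + L * ‖v‖ ^ 2 * t) t := by
    have h := (((hasDerivAt_id t).mul_const ⟪f' y, v⟫).const_add (f y)).add
      (((hasDerivAt_id t).pow 2).const_mul (L / 2 * ‖v‖ ^ 2))
    refine h.congr_deriv ?_
    simp
    ring
  have hf := hasDerivAt_along_line hgrad y v
  have h := image_le_of_deriv_right_le_deriv_boundary (a := 0) (b := 1)
    (fun t _ => (hf t).continuousAt.continuousWithinAt)
    (fun t _ => (hf t).hasDerivWithinAt)
    (B := fun t : ℝ => f y + t * ⟪f' y, v⟫ + L / 2 * ‖v‖ ^ 2 * t ^ 2) (by simp)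
    (fun t _ => (hB t).continuousAt.continuousWithinAt)
    (fun t _ => (hB t).hasDerivWithinAt)
    (fun t ht => by
      have h1 := real_inner_le_norm (f' (y + t • v) - f' y) v
      have h2 := hlip (y + t • v) y
      rw [add_sub_cancel_left, norm_smul, Real.norm_of_nonneg ht.1] at h2
      rw [inner_sub_left] at h1
      have h3 := mul_le_mul_of_nonneg_right h2 (norm_nonneg v)
      linarith)
    (x := 1) (by simp)
  simpa using h

/-- The tangent-plane inequality between an arbitrary point `y` and a point `w` where the gradient
vanishes, strengthened by the smoothness of `f`. -/
lemma gradient_ineq_strong {f : E → ℝ} {f' : E → E} {L : ℝ} (hL : 0 < L)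
    (hconv : ConvexOn ℝ Set.univ f) (hgrad : ∀ z, HasGradientAt f (f' z) z)
    (hlip : ∀ z w, ‖f' z - f' w‖ ≤ L * ‖z - w‖) (y w : E) (hw : f' w = 0) :
    f y - f w + ‖f' y‖ ^ 2 / (2 * L) ≤ ⟪f' y, y - w⟫ := by
  -- The step `(1 / L) • f' y` from `w` minimizes the quadratic upper model of
  -- `z ↦ f z - ⟪f' y, z⟫` at `w`; by convexity `y` is a global minimizer of this function.
  have h1 := gradient_ineq hconv hgrad y (w + (1 / L) • f' y)
  have h2 := descent hgrad hlip w ((1 / L) • f' y)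
  have h3 : w + (1 / L) • f' y - y = (1 / L) • f' y - (y - w) := by abel
  rw [hw, inner_zero_left, norm_smul, Real.norm_of_nonneg (by positivity)] at h2
  rw [h3, inner_sub_right, real_inner_smul_right, real_inner_self_eq_norm_sq] at h1
  have h4 : L / 2 * (1 / L * ‖f' y‖) ^ 2 = ‖f' y‖ ^ 2 / (2 * L) := by field_simp
  have h5 : 1 / L * ‖f' y‖ ^ 2 = 2 * (‖f' y‖ ^ 2 / (2 * L)) := by field_simp
  linarith

end Aux

/-- Key per-step inequality in the proof of Theorem 2 (time-varying step-sizes),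
with p_k = k(x_k - x_{k-1}). -/
theorem heavy_ball_time_varying_per_step
    {n : ℕ} (f : EuclideanSpace ℝ (Fin n) → ℝ)
    (f' : EuclideanSpace ℝ (Fin n) → EuclideanSpace ℝ (Fin n))
    (L : ℝ) (hL : 0 < L)
    (hconv : ConvexOn ℝ Set.univ f)
    (hC1 : ContDiff ℝ 1 f)
    (hgrad : ∀ z, HasGradientAt f (f' z) z)
    (hlip : ∀ z w, ‖f' z - f' w‖ ≤ L * ‖z - w‖)
    (xstar : EuclideanSpace ℝ (Fin n)) (hmin : ∀ z, f xstar ≤ f z)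
    (a₀ : ℝ) (ha0 : 0 < a₀) (ha1 : a₀ ≤ 1 / L)
    (x : ℤ → EuclideanSpace ℝ (Fin n))
    (hiter : ∀ k : ℤ, 0 ≤ k →
      x (k + 1) = x k - (a₀ / ((k : ℝ) + 2)) • f' (x k) +
        ((k : ℝ) / ((k : ℝ) + 2)) • (x k - x (k - 1)))
    (k : ℤ) (hk : 0 ≤ k) :
    2 * a₀ * ((k : ℝ) + 1) * (f (x k) - f xstar) +
        ‖x (k + 1) + ((k : ℝ) + 1) • (x (k + 1) - x k) - xstar‖ ^ 2 ≤
      2 * a₀ * (k : ℝ) * (f (x (k - 1)) - f xstar) +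
        ‖x k + (k : ℝ) • (x k - x (k - 1)) - xstar‖ ^ 2 := by
  have hstar : f' xstar = 0 := by
    have h := IsLocalMin.hasFDerivAt_eq_zero (Filter.Eventually.of_forall hmin) (hgrad xstar).hasFDerivAt
    simpa using h
  have hk' : (0 : ℝ) ≤ k := by exact_mod_cast hk
  have hstep : x (k + 1) + ((k : ℝ) + 1) • (x (k + 1) - x k) - xstar =
      (x k + (k : ℝ) • (x k - x (k - 1)) - xstar) - a₀ • f' (x k) := by
    have hne : (k : ℝ) + 2 ≠ 0 := by positivity
    rw [hiter k hk]
    match_scalars <;> field_simp <;> ring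
  have hsplit : ⟪x k + (k : ℝ) • (x k - x (k - 1)) - xstar, f' (x k)⟫ =
      ⟪f' (x k), x k - xstar⟫ + k * ⟪f' (x k), x k - x (k - 1)⟫ := by
    rw [real_inner_comm, ← real_inner_smul_right, ← inner_add_right]
    congr 1
    abel
  have h1 := gradient_ineq_strong hL hconv hgrad hlip (x k) xstar hstar
  have h2 := gradient_ineq hconv hgrad (x k) (x (k - 1))
  rw [← neg_sub (x k) (x (k - 1)), inner_neg_right] at h2
  have h3 : (k : ℝ) * (f (x k) - f (x (k - 1))) ≤ k * ⟪f' (x k), x k - x (k - 1)⟫ :=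
    mul_le_mul_of_nonneg_left (by linarith) hk'
  have h4 : a₀ ^ 2 * ‖f' (x k)‖ ^ 2 ≤ 2 * a₀ * (‖f' (x k)‖ ^ 2 / (2 * L)) := by
    have h := mul_le_mul_of_nonneg_right ha1 (by positivity : 0 ≤ a₀ * ‖f' (x k)‖ ^ 2)
    calc a₀ ^ 2 * ‖f' (x k)‖ ^ 2 = a₀ * (a₀ * ‖f' (x k)‖ ^ 2) := by ring
      _ ≤ 1 / L * (a₀ * ‖f' (x k)‖ ^ 2) := h
      _ = _ := by field_simp
  have h5 := mul_le_mul_of_nonneg_left (add_le_add h1 h3) (by positivity : 0 ≤ 2 * a₀)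
  rw [hstep, norm_sub_sq_real, real_inner_smul_right, hsplit, norm_smul, mul_pow,
    Real.norm_of_nonneg ha0.le]
  linarith
end
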